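/- arXiv:2410.18402 — 7 statements merged into one kernel-verified Lean document; each statement's English description precedes it below -/
import Mathlib

section
/- Let (Ω, F, P) be a probability space and let z, w : Ω → ℝ be random variables with z⁴ and w⁴ integrable. Suppose E[z²] ≥ τ_u, E[z⁴] ≤ τ_l and E[w⁴] ≤ c_w, where τ_u, τ_l, c_w > 0. Let K, T > 0 satisfy K² ≥ τ_l/τ_u and T² ≥ 4√(τ_l · c_w)/τ_u. Then E[ z² · 1{|z| ≤ 2K} · 1{|w| ≤ T} ] ≥ τ_u / 2. -/
open MeasureTheory ProbabilityTheory

/-- Truncated second-moment bound: if `E[z²] ≥ τ_u`, `E[z⁴] ≤ τ_l`, `E[w⁴] ≤ c_w`,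
`K² ≥ τ_l/τ_u` and `T² ≥ 4√(τ_l·c_w)/τ_u`, then
`E[z² · 1{|z| ≤ 2K} · 1{|w| ≤ T}] ≥ τ_u/2`. -/
theorem truncated_second_moment_bound
    {Ω : Type*} [MeasureSpace Ω] [IsProbabilityMeasure (ℙ : Measure Ω)]
    (z w : Ω → ℝ) (hz : Measurable z) (hw : Measurable w)
    (hz4 : Integrable (fun ω => z ω ^ 4)) (hw4 : Integrable (fun ω => w ω ^ 4))
    (τu τl cw K T : ℝ) (hτu : 0 < τu) (hτl : 0 < τl) (hcw : 0 < cw)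
    (hK : 0 < K) (hT : 0 < T)
    (hz2 : τu ≤ ∫ ω, z ω ^ 2) (hz4b : (∫ ω, z ω ^ 4) ≤ τl) (hw4b : (∫ ω, w ω ^ 4) ≤ cw)
    (hK2 : τl / τu ≤ K ^ 2) (hT2 : 4 * Real.sqrt (τl * cw) / τu ≤ T ^ 2) :
    τu / 2 ≤ ∫ ω, z ω ^ 2 * Set.indicator {ω' | |z ω'| ≤ 2 * K} (fun _ => (1 : ℝ)) ω *
      Set.indicator {ω' | |w ω'| ≤ T} (fun _ => (1 : ℝ)) ω := by
  have hiz2 : Integrable (fun ω => z ω ^ 2) := by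
    refine Integrable.mono' ((integrable_const (1:ℝ)).add hz4) (hz.pow_const 2).aestronglyMeasurable
      (Filter.Eventually.of_forall fun ω => ?_)
    simp only [Real.norm_eq_abs, Pi.add_apply]
    rw [abs_of_nonneg (sq_nonneg _)]
    nlinarith [sq_nonneg (z ω ^ 2 - 1), sq_nonneg (z ω ^ 2)]
  have hmz : MeasurableSet {ω' | |z ω'| ≤ 2 * K} := measurableSet_le (by fun_prop) (by fun_prop)
  have hmw : MeasurableSet {ω' | |w ω'| ≤ T} := measurableSet_le (by fun_prop) (by fun_prop)
  have hif : Integrable (fun ω => z ω ^ 2 *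
      Set.indicator {ω' | |z ω'| ≤ 2 * K} (fun _ => (1 : ℝ)) ω *
      Set.indicator {ω' | |w ω'| ≤ T} (fun _ => (1 : ℝ)) ω) := by
    refine Integrable.mono' hiz2 (((hz.pow_const 2).mul (measurable_const.indicator hmz)).mul
      (measurable_const.indicator hmw)).aestronglyMeasurable
      (Filter.Eventually.of_forall fun ω => ?_)
    simp only [Real.norm_eq_abs, Set.indicator_apply]
    split_ifs <;> simp [sq_nonneg]
  obtain ⟨s, hs, hs2⟩ : ∃ s : ℝ, 0 < s ∧ τl = s ^ 2 :=
    ⟨Real.sqrt τl, Real.sqrt_pos.2 hτl, (Real.sq_sqrt hτl.le).symm⟩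
  obtain ⟨c, hc, hc2⟩ : ∃ c : ℝ, 0 < c ∧ cw = c ^ 2 :=
    ⟨Real.sqrt cw, Real.sqrt_pos.2 hcw, (Real.sq_sqrt hcw.le).symm⟩
  subst hs2 hc2
  have hsq : Real.sqrt (s ^ 2 * c ^ 2) = s * c := by
    rw [← mul_pow]; exact Real.sqrt_sq (by positivity)
  rw [hsq, div_le_iff₀ hτu] at hT2
  rw [div_le_iff₀ hτu] at hK2
  have hA0 : 0 ≤ 1 / (4 * K ^ 2) := by positivity
  have hB0 : 0 ≤ c / s / (2 * T ^ 2) := by positivity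
  have hC0 : 0 ≤ s / c / (2 * T ^ 2) := by positivity
  have hA : 1 / (4 * K ^ 2) * s ^ 2 ≤ τu / 4 := by
    rw [div_mul_eq_mul_div, div_le_iff₀ (by positivity)]; linarith
  have hBC : c / s / (2 * T ^ 2) * s ^ 2 + s / c / (2 * T ^ 2) * c ^ 2 ≤ τu / 4 := by
    have : c / s / (2 * T ^ 2) * s ^ 2 + s / c / (2 * T ^ 2) * c ^ 2 = s * c / T ^ 2 := by
      field_simp; ring
    rw [this, div_le_iff₀ (by positivity)]; linarith
  have hpt : ∀ ω, z ω ^ 2 - (1 / (4 * K ^ 2) + c / s / (2 * T ^ 2)) * z ω ^ 4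
      - s / c / (2 * T ^ 2) * w ω ^ 4 ≤ z ω ^ 2 *
      Set.indicator {ω' | |z ω'| ≤ 2 * K} (fun _ => (1 : ℝ)) ω *
      Set.indicator {ω' | |w ω'| ≤ T} (fun _ => (1 : ℝ)) ω := by
    intro ω
    have p1 : 0 ≤ 1 / (4 * K ^ 2) * z ω ^ 4 := by positivity
    have p2 : 0 ≤ c / s / (2 * T ^ 2) * z ω ^ 4 := by positivity
    have p3 : 0 ≤ s / c / (2 * T ^ 2) * w ω ^ 4 := by positivity
    by_cases h1 : |z ω| ≤ 2 * K
    · by_cases h2 : |w ω| ≤ T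
      · simp only [Set.indicator_apply, Set.mem_ofPred_eq, h1, h2, if_true]
        linarith
      · simp only [Set.indicator_apply, Set.mem_ofPred_eq, h1, h2, if_true, if_false]
        have h3 : T ^ 2 ≤ w ω ^ 2 := by
          rw [← sq_abs (w ω)]; push Not at h2; gcongr
        have h4 : z ω ^ 2 ≤ z ω ^ 2 * w ω ^ 2 / T ^ 2 := by
          rw [le_div_iff₀ (by positivity)]; gcongr
        have h5 : c / s / (2 * T ^ 2) * z ω ^ 4 + s / c / (2 * T ^ 2) * w ω ^ 4
            - z ω ^ 2 * w ω ^ 2 / T ^ 2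
            = (c * z ω ^ 2 - s * w ω ^ 2) ^ 2 / (2 * T ^ 2 * s * c) := by
          field_simp; ring
        have h6 : 0 ≤ (c * z ω ^ 2 - s * w ω ^ 2) ^ 2 / (2 * T ^ 2 * s * c) := by positivity
        linarith
    · simp only [Set.indicator_apply, Set.mem_ofPred_eq, h1, if_false, mul_zero, zero_mul]
      have h3 : (2 * K) ^ 2 ≤ z ω ^ 2 := by
        rw [← sq_abs (z ω)]; push Not at h1; gcongr
      have h4 : z ω ^ 2 ≤ 1 / (4 * K ^ 2) * z ω ^ 4 := by
        rw [div_mul_eq_mul_div, le_div_iff₀ (by positivity)]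
        nlinarith [sq_nonneg (z ω)]
      linarith
  have hmono := integral_mono ((hiz2.sub (hz4.const_mul _)).sub (hw4.const_mul _)) hif hpt
  have hI : ∫ ω, (z ω ^ 2 - (1 / (4 * K ^ 2) + c / s / (2 * T ^ 2)) * z ω ^ 4
      - s / c / (2 * T ^ 2) * w ω ^ 4) = (∫ ω, z ω ^ 2)
      - (1 / (4 * K ^ 2) + c / s / (2 * T ^ 2)) * (∫ ω, z ω ^ 4)
      - s / c / (2 * T ^ 2) * ∫ ω, w ω ^ 4 := by
    have hsub : Integrable (fun ω => z ω ^ 2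
        - (1 / (4 * K ^ 2) + c / s / (2 * T ^ 2)) * z ω ^ 4) := hiz2.sub (hz4.const_mul _)
    rw [integral_sub hsub (hw4.const_mul _),
      integral_sub hiz2 (hz4.const_mul _), integral_const_mul, integral_const_mul]
  refine le_trans ?_ hmono
  refine le_trans ?_ hI.ge
  have e1 := mul_le_mul_of_nonneg_left hz4b (add_nonneg hA0 hB0)
  have e2 := mul_le_mul_of_nonneg_left hw4b hC0
  linarith
end

section
/- Let E be a real inner product space, f : E → ℝ convex and differentiable, x ∈ E, a, b ≥ 0, and N : E → [0, ∞) a positively homogeneous functional (N(γu) = γ·N(u) for all γ ≥ 0 and u ∈ E). Suppose that for every u ∈ E with ‖u‖ = 1 one has ⟨∇f(x + u) - ∇f(x), u⟩ ≥ a - b·N(u)². Then for every v ∈ E with ‖v‖ > 1, ⟨∇f(x + v) - ∇f(x), v⟩ ≥ a‖v‖ - b·N(v)²/‖v‖. -/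
open RealInnerProductSpace

/-- Rescaling argument: for a convex differentiable `f`, a restricted strong
convexity lower bound on the unit sphere extends to vectors of norm greater
than one. -/
theorem rsc_rescaling {E : Type*} [NormedAddCommGroup E] [InnerProductSpace ℝ E] [CompleteSpace E]
    (f : E → ℝ) (f' : E → E) (hconv : ConvexOn ℝ Set.univ f)
    (hdiff : ∀ x, HasGradientAt f (f' x) x)
    (x : E) (a b : ℝ) (ha : 0 ≤ a) (hb : 0 ≤ b)
    (N : E → ℝ) (hN0 : ∀ u, 0 ≤ N u)
    (hNhom : ∀ γ : ℝ, 0 ≤ γ → ∀ u, N (γ • u) = γ * N u)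
    (hunit : ∀ u : E, ‖u‖ = 1 → a - b * N u ^ 2 ≤ ⟪f' (x + u) - f' x, u⟫)
    (v : E) (hv : 1 < ‖v‖) :
    a * ‖v‖ - b * N v ^ 2 / ‖v‖ ≤ ⟪f' (x + v) - f' x, v⟫ := by
  have hder : ∀ γ : ℝ, HasDerivAt (fun γ : ℝ => f (x + γ • v)) ⟪f' (x + γ • v), v⟫ γ := by
    intro γ
    have h1 : HasDerivAt (fun γ : ℝ => x + γ • v) v γ := by
      simpa using ((hasDerivAt_id γ).smul_const v).const_add x
    have h2 := (hdiff (x + γ • v)).hasFDerivAt.comp_hasDerivAt γ h1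
    rw [InnerProductSpace.toDual_apply_apply] at h2
    exact h2
  have hc : ConvexOn ℝ Set.univ (fun γ : ℝ => f (x + γ • v)) := by
    refine ⟨convex_univ, fun p _ q _ s t hs ht hst => ?_⟩
    have h := hconv.2 (Set.mem_univ (x + p • v)) (Set.mem_univ (x + q • v)) hs ht hst
    have e : x + (s • p + t • q) • v = s • (x + p • v) + t • (x + q • v) := by
      have : x = (s + t) • x := by rw [hst, one_smul]
      nth_rewrite 1 [this]
      simp only [smul_eq_mul]
      module
    simpa only [e] using h
  have hmono := hc.monotoneOn_deriv (fun p _ => (hder p).differentiableAt)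
  have ht : 0 < ‖v‖ := by linarith
  have hm := hmono (Set.mem_univ ‖v‖⁻¹) (Set.mem_univ 1) (inv_le_one_of_one_le₀ hv.le)
  rw [(hder _).deriv, (hder _).deriv, one_smul] at hm
  have hu := hunit (‖v‖⁻¹ • v) (by rw [norm_smul, norm_inv, norm_norm, inv_mul_cancel₀ ht.ne'])
  rw [hNhom _ (inv_nonneg.2 ht.le), inner_smul_right] at hu
  have h3 := mul_le_mul_of_nonneg_left hu ht.le
  rw [mul_inv_cancel_left₀ ht.ne', inner_sub_left] at h3
  rw [inner_sub_left]
  have e : ‖v‖ * (a - b * (‖v‖⁻¹ * N v) ^ 2) = a * ‖v‖ - b * N v ^ 2 / ‖v‖ := by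
    field_simp
  linarith
end

section
/- Let λ, k₀, μ > 0 and let g_λ satisfy Assumption 1 with parameters λ, k₀, μ. Then λ·k₀·x ≤ g_λ(x) + (μ/2)x² for all x ≥ 0. -/
/-- Assumption 1 of the paper on the nonconvex penalty `g_λ` (with derivative
`g'` on `(0, ∞)`) and parameters `lam = λ`, `k0 = k₀`, `mu = μ`. -/
structure Assumption1 (g g' : ℝ → ℝ) (lam k0 mu : ℝ) : Prop where
  nonneg : ∀ x, 0 ≤ g x
  symm : ∀ x, g (-x) = g x
  concave : ConcaveOn ℝ (Set.Ici (0 : ℝ)) g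
  mono : MonotoneOn g (Set.Ici (0 : ℝ))
  zero : g 0 = 0
  ratio_anti : AntitoneOn (fun x => g x / x) (Set.Ioi (0 : ℝ))
  hasDeriv : ∀ x : ℝ, 0 < x → HasDerivAt g (g' x) x
  deriv_le : ∀ x : ℝ, 0 < x → g' x ≤ lam * k0
  deriv_lim : Filter.Tendsto g' (nhdsWithin 0 (Set.Ioi 0)) (nhds (lam * k0))
  convex_quad : ConvexOn ℝ (Set.Ioi (0 : ℝ)) (fun x => g x + mu / 2 * x ^ 2)

/-- The scalar inequality `λ·k₀·x ≤ g_λ(x) + (μ/2)x²` for all `x ≥ 0`. -/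
theorem scalar_penalty_lower_bound (g g' : ℝ → ℝ) (lam k0 mu : ℝ)
    (hlam : 0 < lam) (hk0 : 0 < k0) (hmu : 0 < mu)
    (h : Assumption1 g g' lam k0 mu) (x : ℝ) (hx : 0 ≤ x) :
    lam * k0 * x ≤ g x + mu / 2 * x ^ 2 := by
  rcases hx.eq_or_lt with rfl | hx
  · simp [h.zero]
  have key : ∀ y, 0 < y → y < x → g' y * (x - y) ≤ g x + mu / 2 * x ^ 2 := by
    intro y hy hyx
    have hd : HasDerivAt (fun x => g x + mu / 2 * x ^ 2) (g' y + mu * y) y := by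
      have h2 := (h.hasDeriv y hy).add (((hasDerivAt_id y).pow 2).const_mul (mu / 2))
      refine h2.congr_deriv ?_
      simp
      ring
    have hs := h.convex_quad.le_slope_of_hasDerivAt hy hx hyx hd
    rw [slope_def_field, le_div_iff₀ (sub_pos.2 hyx)] at hs
    have h3 := h.nonneg y
    have h4 : 0 ≤ mu * y * (x - y) := by
      have := sub_pos.2 hyx
      positivity
    have h5 : 0 ≤ mu / 2 * y ^ 2 := by positivity
    nlinarith
  have ht : Filter.Tendsto (fun y => g' y * (x - y)) (nhdsWithin 0 (Set.Ioi 0))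
      (nhds (lam * k0 * (x - 0))) :=
    h.deriv_lim.mul (((continuous_const.sub continuous_id).tendsto 0).mono_left
      nhdsWithin_le_nhds)
  rw [sub_zero] at ht
  refine le_of_tendsto ht ?_
  filter_upwards [Ioo_mem_nhdsGT hx] with y hy
  exact key y hy.1 hy.2
end

section
/- Let E be a real inner product space, f : E → ℝ differentiable with L-Lipschitz gradient (‖∇f(Y₁) - ∇f(Y₂)‖ ≤ L‖Y₁ - Y₂‖ for all Y₁, Y₂ ∈ E, L ≥ 0), S₁ : E → ℝ any function, S₂ : E → ℝ convex and differentiable, D ⊆ E, β > 0, ξ ∈ (0, 1/2), and ρ > L/(1 - 2ξ). Let X, X⁺ ∈ D and W ∈ E. Define Q(Y) := f(X) + ⟨∇f(X), Y - X⟩ + (ρ/2)‖Y - X‖² + βS₁(Y) - βS₂(X) - β⟨∇S₂(X), Y - X⟩ and H(Y) := f(Y) + βS₁(Y) - βS₂(Y). Assume Q(Y) ≥ Q(X⁺) + ⟨W, Y - X⁺⟩ for all Y ∈ D, and ‖W‖ ≤ ξρ‖X⁺ - X‖. Then H(X⁺) + a‖X⁺ - X‖² ≤ H(X), where a := (1 -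 2ξ)ρ/2 - L/2 > 0. -/
open RealInnerProductSpace

theorem pmm_line_deriv {E : Type*} [NormedAddCommGroup E]
    [InnerProductSpace ℝ E] [CompleteSpace E] (f : E → ℝ) (G : E → E)
    (hf : ∀ X, HasGradientAt f (G X) X) (X V : E) (t : ℝ) :
    HasDerivAt (fun s : ℝ => f (X + s • V)) ⟪G (X + t • V), V⟫ t := by
  have h1 : HasDerivAt (fun s : ℝ => X + s • V) V t := by
    simpa using ((hasDerivAt_id t).smul_const V).const_add X
  have h2 := (hf (X + t • V)).hasFDerivAt.comp_hasDerivAt t h1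
  simpa [Function.comp_def] using h2

theorem pmm_descent {E : Type*} [NormedAddCommGroup E]
    [InnerProductSpace ℝ E] [CompleteSpace E] (f : E → ℝ) (G : E → E) (L : ℝ)
    (hf : ∀ X, HasGradientAt f (G X) X)
    (hlip : ∀ Y₁ Y₂ : E, ‖G Y₁ - G Y₂‖ ≤ L * ‖Y₁ - Y₂‖) (X V : E) :
    f (X + V) ≤ f X + ⟪G X, V⟫ + L / 2 * ‖V‖ ^ 2 := by
  have hB : ∀ t : ℝ, HasDerivAt
      (fun s : ℝ => f X + s * ⟪G X, V⟫ + L / 2 * ‖V‖ ^ 2 * s ^ 2)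
      (⟪G X, V⟫ + L * ‖V‖ ^ 2 * t) t := by
    intro t
    have h := (((hasDerivAt_id t).mul_const ⟪G X, V⟫).const_add (f X)).add
      (((hasDerivAt_id t).pow 2).const_mul (L / 2 * ‖V‖ ^ 2))
    refine HasDerivAt.congr_deriv h ?_
    simp only [id, Nat.cast_ofNat]
    ring
  have hd := pmm_line_deriv f G hf X V
  have key := image_le_of_deriv_right_le_deriv_boundary
    (f := fun s : ℝ => f (X + s • V)) (a := 0) (b := 1)
    (fun t _ => (hd t).continuousAt.continuousWithinAt)
    (fun t _ => (hd t).hasDerivWithinAt)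
    (B := fun s : ℝ => f X + s * ⟪G X, V⟫ + L / 2 * ‖V‖ ^ 2 * s ^ 2)
    (by simp)
    (fun t _ => (hB t).continuousAt.continuousWithinAt)
    (fun t _ => (hB t).hasDerivWithinAt)
    (by
      intro t ht
      have h1 : ⟪G (X + t • V) - G X, V⟫ ≤ ‖G (X + t • V) - G X‖ * ‖V‖ :=
        real_inner_le_norm _ _
      have h2 := hlip (X + t • V) X
      rw [add_sub_cancel_left, norm_smul, Real.norm_of_nonneg ht.1] at h2
      have h3 := mul_le_mul_of_nonneg_right h2 (norm_nonneg V)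
      rw [inner_sub_left] at h1
      nlinarith)
    (Set.right_mem_Icc.2 zero_le_one)
  simpa using key

theorem pmm_convex {E : Type*} [NormedAddCommGroup E]
    [InnerProductSpace ℝ E] [CompleteSpace E] (f : E → ℝ) (G : E → E)
    (hf : ∀ X, HasGradientAt f (G X) X) (hc : ConvexOn ℝ Set.univ f) (X V : E) :
    f X + ⟪G X, V⟫ ≤ f (X + V) := by
  have hd := pmm_line_deriv f G hf X V 0
  have hconv : ConvexOn ℝ Set.univ (fun s : ℝ => f (X + s • V)) := by
    refine ⟨convex_univ, ?_⟩
    intro x _ y _ a b ha hb hab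
    have h := hc.2 (Set.mem_univ (X + x • V)) (Set.mem_univ (X + y • V)) ha hb hab
    have e : a • (X + x • V) + b • (X + y • V) = X + (a • x + b • y) • V := by
      have : X = (a + b) • X := by rw [hab, one_smul]
      conv_rhs => rw [this]
      simp only [smul_eq_mul]
      module
    rwa [e] at h
  have h := hconv.le_slope_of_hasDerivAt (Set.mem_univ 0) (Set.mem_univ 1) zero_lt_one hd
  simp [slope_def_field] at h
  linarith

/-- Sufficient descent lemma (Lemma G.1) for the inexact proximal
majorization–minimization algorithm. -/
theorem pmm_sufficient_descent {E : Type*} [NormedAddCommGroup E]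
    [InnerProductSpace ℝ E] [CompleteSpace E]
    (f : E → ℝ) (Gf : E → E) (L : ℝ) (hL : 0 ≤ L)
    (hfdiff : ∀ X, HasGradientAt f (Gf X) X)
    (hflip : ∀ Y₁ Y₂ : E, ‖Gf Y₁ - Gf Y₂‖ ≤ L * ‖Y₁ - Y₂‖)
    (S₁ S₂ : E → ℝ) (hS₂conv : ConvexOn ℝ Set.univ S₂)
    (GS₂ : E → E) (hS₂diff : ∀ X, HasGradientAt S₂ (GS₂ X) X)
    (D : Set E) (β ξ ρ : ℝ) (hβ : 0 < β)
    (hξ : ξ ∈ Set.Ioo (0 : ℝ) (1 / 2)) (hρ : L / (1 - 2 * ξ) < ρ)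
    (X Xp : E) (hX : X ∈ D) (hXp : Xp ∈ D) (W : E)
    (Q H : E → ℝ)
    (hQ : ∀ Y, Q Y = f X + ⟪Gf X, Y - X⟫ + ρ / 2 * ‖Y - X‖ ^ 2 +
      β * S₁ Y - β * S₂ X - β * ⟪GS₂ X, Y - X⟫)
    (hH : ∀ Y, H Y = f Y + β * S₁ Y - β * S₂ Y)
    (hsub : ∀ Y ∈ D, Q Xp + ⟪W, Y - Xp⟫ ≤ Q Y)
    (hW : ‖W‖ ≤ ξ * ρ * ‖Xp - X‖) :
    0 < (1 - 2 * ξ) * ρ / 2 - L / 2 ∧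
      H Xp + ((1 - 2 * ξ) * ρ / 2 - L / 2) * ‖Xp - X‖ ^ 2 ≤ H X := by
  have hpos : 0 < 1 - 2 * ξ := by linarith [hξ.2]
  have hρ' : L < ρ * (1 - 2 * ξ) := (div_lt_iff₀ hpos).1 hρ
  refine ⟨by linarith, ?_⟩
  have h1 := pmm_descent f Gf L hfdiff hflip X (Xp - X)
  have h2 := pmm_convex S₂ GS₂ hS₂diff hS₂conv X (Xp - X)
  rw [add_sub_cancel] at h1 h2
  have h2' := mul_le_mul_of_nonneg_left h2 hβ.le
  have h3 := hsub X hX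
  have h4 : -(‖W‖ * ‖X - Xp‖) ≤ ⟪W, X - Xp⟫ :=
    (abs_le.1 (abs_real_inner_le_norm W (X - Xp))).1
  rw [norm_sub_rev X Xp] at h4
  have h5 := mul_le_mul_of_nonneg_right hW (norm_nonneg (Xp - X))
  rw [hQ, hQ] at h3
  simp only [sub_self, inner_zero_right, norm_zero] at h3
  rw [hH, hH]
  nlinarith
end

section
/- Let E be a real inner product space, f, S₂ : E → ℝ differentiable, L, L₁ ≥ 0, β, ρ > 0, ξ ∈ (0, 1/2), and B ⊆ E. Assume ‖∇f(Y₁) - ∇f(Y₂)‖ ≤ L‖Y₁ - Y₂‖ for all Y₁, Y₂ ∈ E, and ‖∇S₂(Y₁) - ∇S₂(Y₂)‖ ≤ L₁‖Y₁ - Y₂‖ for all Y₁, Y₂ ∈ B. Let X, X⁺ ∈ B and Y ∈ E, and suppose the vector W := ∇f(X) + ρ(X⁺ - X) - β∇S₂(X) + Y satisfies ‖W‖ ≤ ξρ‖X⁺ - X‖. Then the vector N := ∇f(X⁺) - β∇S₂(X⁺) + Y satisfies ‖N‖ ≤ (L + βL₁ + (ξ + 1)ρ)‖X⁺ - X‖.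 -/
/-- Relative error lemma (Lemma G.2) for the inexact proximal
majorization–minimization algorithm. -/
theorem pmm_relative_error {E : Type*} [NormedAddCommGroup E]
    [InnerProductSpace ℝ E] [CompleteSpace E]
    (f S₂ : E → ℝ) (Gf GS₂ : E → E) (L L₁ : ℝ) (hL : 0 ≤ L) (hL₁ : 0 ≤ L₁)
    (β ρ ξ : ℝ) (hβ : 0 < β) (hρ : 0 < ρ) (hξ : ξ ∈ Set.Ioo (0 : ℝ) (1 / 2))
    (B : Set E)
    (hfdiff : ∀ X, HasGradientAt f (Gf X) X)
    (hS₂diff : ∀ X, HasGradientAt S₂ (GS₂ X) X)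
    (hflip : ∀ Y₁ Y₂ : E, ‖Gf Y₁ - Gf Y₂‖ ≤ L * ‖Y₁ - Y₂‖)
    (hS₂lip : ∀ Y₁ ∈ B, ∀ Y₂ ∈ B, ‖GS₂ Y₁ - GS₂ Y₂‖ ≤ L₁ * ‖Y₁ - Y₂‖)
    (X Xp : E) (hX : X ∈ B) (hXp : Xp ∈ B) (Y : E)
    (hW : ‖Gf X + ρ • (Xp - X) - β • GS₂ X + Y‖ ≤ ξ * ρ * ‖Xp - X‖) :
    ‖Gf Xp - β • GS₂ Xp + Y‖ ≤ (L + β * L₁ + (ξ + 1) * ρ) * ‖Xp - X‖ := by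
  have h1 := hflip Xp X
  have h2 := mul_le_mul_of_nonneg_left (hS₂lip Xp hXp X hX) hβ.le
  have e : Gf Xp - β • GS₂ Xp + Y
      = (Gf X + ρ • (Xp - X) - β • GS₂ X + Y) + (Gf Xp - Gf X)
        - β • (GS₂ Xp - GS₂ X) - ρ • (Xp - X) := by
    module
  have n1 : ‖β • (GS₂ Xp - GS₂ X)‖ = β * ‖GS₂ Xp - GS₂ X‖ := by
    rw [norm_smul, Real.norm_of_nonneg hβ.le]
  have n2 : ‖ρ • (Xp - X)‖ = ρ * ‖Xp - X‖ := by
    rw [norm_smul, Real.norm_of_nonneg hρ.le]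
  rw [e]
  have t1 := norm_sub_le ((Gf X + ρ • (Xp - X) - β • GS₂ X + Y) + (Gf Xp - Gf X)
        - β • (GS₂ Xp - GS₂ X)) (ρ • (Xp - X))
  have t2 := norm_sub_le ((Gf X + ρ • (Xp - X) - β • GS₂ X + Y) + (Gf Xp - Gf X))
        (β • (GS₂ Xp - GS₂ X))
  have t3 := norm_add_le (Gf X + ρ • (Xp - X) - β • GS₂ X + Y) (Gf Xp - Gf X)
  linarith
end

section
/- Let (Δ_t)_{t≥0} be a nonincreasing sequence of nonnegative real numbers converging to 0, and let a₁ > 0 and θ ≥ 1 be such that Δ_t ≤ (Δ_{t-1} - Δ_t) + a₁ (Δ_{t-1} - Δ_t)^θ for all t ≥ 1. Then there exist w > 0 and ϑ ∈ [0, 1) such that Δ_t ≤ w ϑ^t for all t ≥ 0. -/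
open Filter

/-- R-linear convergence recursion (core of Theorem 4.2(ii)): a nonincreasing
nonnegative sequence `Δ_t → 0` satisfying
`Δ_t ≤ (Δ_{t-1} - Δ_t) + a₁ (Δ_{t-1} - Δ_t)^θ` with `θ ≥ 1` decays
geometrically. -/
theorem tail_sum_linear_convergence (Δ : ℕ → ℝ)
    (hnn : ∀ t, 0 ≤ Δ t) (hmono : ∀ t, Δ (t + 1) ≤ Δ t)
    (hlim : Tendsto Δ atTop (nhds 0))
    (a₁ θ : ℝ) (ha₁ : 0 < a₁) (hθ : 1 ≤ θ)
    (hrec : ∀ t : ℕ, Δ (t + 1) ≤ (Δ t - Δ (t + 1)) + a₁ * (Δ t - Δ (t + 1)) ^ θ) :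
    ∃ w > 0, ∃ ϑ ∈ Set.Ico (0 : ℝ) 1, ∀ t : ℕ, Δ t ≤ w * ϑ ^ t := by
  have hanti : Antitone Δ := antitone_nat_of_succ_le hmono
  have hM : 0 < Δ 0 + 1 := by linarith [hnn 0]
  obtain ⟨K, hK⟩ : ∃ K, K = (Δ 0 + 1) ^ (θ - 1) := ⟨_, rfl⟩
  have hKpos : 0 < K := hK ▸ Real.rpow_pos_of_pos hM _
  have hc : 0 < 1 + a₁ * K := by positivity
  obtain ⟨c, hcd⟩ : ∃ c, c = 1 + a₁ * K := ⟨_, rfl⟩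
  rw [← hcd] at hc
  have hstep : ∀ t, Δ (t + 1) ≤ c / (c + 1) * Δ t := by
    intro t
    have hd0 : 0 ≤ Δ t - Δ (t + 1) := by linarith [hmono t]
    have hdM : Δ t - Δ (t + 1) ≤ Δ 0 + 1 := by
      linarith [hanti (Nat.zero_le t), hnn (t + 1)]
    have hpow : (Δ t - Δ (t + 1)) ^ θ ≤ K * (Δ t - Δ (t + 1)) := by
      rcases hd0.eq_or_lt with h | h
      · rw [← h, Real.zero_rpow (by linarith)]; simp
      · have h1 : (Δ t - Δ (t + 1)) ^ θ
            = (Δ t - Δ (t + 1)) ^ (θ - 1) * (Δ t - Δ (t + 1)) := by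
          rw [Real.rpow_sub_one h.ne']
          field_simp
        rw [h1, hK]
        exact mul_le_mul_of_nonneg_right
          (Real.rpow_le_rpow hd0 hdM (by linarith)) hd0
    have h2 := hrec t
    have h3 := mul_le_mul_of_nonneg_left hpow ha₁.le
    have h4 : Δ (t + 1) ≤ c * (Δ t - Δ (t + 1)) := by
      rw [hcd]; linarith
    rw [div_mul_eq_mul_div, le_div_iff₀ (by linarith)]
    linarith
  have hq : 0 ≤ c / (c + 1) := by positivity
  refine ⟨Δ 0 + 1, hM, c / (c + 1), ⟨hq, ?_⟩, ?_⟩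
  · rw [div_lt_one (by linarith)]; linarith
  · intro t
    induction t with
    | zero => simp
    | succ n ih =>
      calc Δ (n + 1) ≤ c / (c + 1) * Δ n := hstep n
        _ ≤ c / (c + 1) * ((Δ 0 + 1) * (c / (c + 1)) ^ n) :=
          mul_le_mul_of_nonneg_left ih hq
        _ = (Δ 0 + 1) * (c / (c + 1)) ^ (n + 1) := by ring
end

section
/- Let α ∈ (1/2, 1) and set τ := (1 - 2α)/(1 - α), so τ < 0. Let (Δ_t)_{t≥0} be a nonincreasing sequence of positive real numbers converging to 0, and let a₃ > 0 be such that Δ_t^{α/(1-α)} ≤ a₃ (Δ_{t-1} - Δ_t) for all t ≥ 1. Then there exists w > 0 such that Δ_t ≤ w · t^{-(1-α)/(2α-1)} for all t ≥ 1. -/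
open Filter

/-- R-sublinear convergence recursion (core of Theorem 4.2(iii)): for
`α ∈ (1/2, 1)` (so that `τ := (1-2α)/(1-α) < 0`), a nonincreasing positive
sequence `Δ_t → 0` satisfying `Δ_t^{α/(1-α)} ≤ a₃ (Δ_{t-1} - Δ_t)` obeys
`Δ_t = O(t^{-(1-α)/(2α-1)})`. -/
theorem tail_sum_sublinear_convergence (α : ℝ) (hα : α ∈ Set.Ioo (1 / 2 : ℝ) 1)
    (τ : ℝ) (hτ : τ = (1 - 2 * α) / (1 - α)) (hτneg : τ < 0)
    (Δ : ℕ → ℝ) (hpos : ∀ t, 0 < Δ t) (hmono : ∀ t, Δ (t + 1) ≤ Δ t)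
    (hlim : Tendsto Δ atTop (nhds 0))
    (a₃ : ℝ) (ha₃ : 0 < a₃)
    (hrec : ∀ t : ℕ, Δ (t + 1) ^ (α / (1 - α)) ≤ a₃ * (Δ t - Δ (t + 1))) :
    ∃ w > 0, ∀ t : ℕ, 1 ≤ t → Δ t ≤ w * (t : ℝ) ^ (-(1 - α) / (2 * α - 1)) := by
  obtain ⟨hα1, hα2⟩ := hα
  have h1α : 0 < 1 - α := by linarith
  have h2α : 0 < 2 * α - 1 := by linarith
  obtain ⟨p, hp⟩ : ∃ p, p = (2 * α - 1) / (1 - α) := ⟨_, rfl⟩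
  have hp0 : 0 < p := by rw [hp]; positivity
  have hβ : α / (1 - α) = 1 + p := by rw [hp]; field_simp; ring
  have hexp : -(1 - α) / (2 * α - 1) = -(1 / p) := by rw [hp]; field_simp
  rw [hβ] at hrec
  rw [hexp]
  have hanti : Antitone Δ := antitone_nat_of_succ_le hmono
  obtain ⟨Y, hY⟩ : ∃ Y, Y = Δ 0 ^ p := ⟨_, rfl⟩
  have hY0 : 0 < Y := by rw [hY]; exact Real.rpow_pos_of_pos (hpos 0) p
  obtain ⟨m, hm⟩ : ∃ m, m = p / (a₃ + Y) := ⟨_, rfl⟩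
  have hm0 : 0 < m := by rw [hm]; positivity
  obtain ⟨c, hc⟩ : ∃ c, c = m / (1 + m * Y) := ⟨_, rfl⟩
  have hc0 : 0 < c := by rw [hc]; positivity
  have hypos : ∀ t, 0 < Δ t ^ p := fun t => Real.rpow_pos_of_pos (hpos t) p
  have hyY : ∀ t, Δ t ^ p ≤ Y := fun t => by
    rw [hY]; exact Real.rpow_le_rpow (hpos t).le (hanti (Nat.zero_le t)) hp0.le
  have key : ∀ t, Δ (t+1) ^ p * (1 + m * Δ (t+1) ^ p) ≤ Δ t ^ p := by
    intro t
    have hr := hrec t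
    have hv := hpos (t+1)
    rw [Real.rpow_add hv, Real.rpow_one] at hr
    have hy := hypos (t+1)
    have hyY' := hyY (t+1)
    obtain ⟨y, hyd⟩ : ∃ y, y = Δ (t+1) ^ p := ⟨_, rfl⟩
    rw [← hyd] at hr hy hyY' ⊢
    have hs : 0 < y / a₃ := by positivity
    have hu : Δ (t+1) * (1 + y / a₃) ≤ Δ t := by
      have : Δ (t+1) * (y / a₃) ≤ Δ t - Δ (t+1) := by
        rw [← mul_div_assoc, div_le_iff₀ ha₃]; linarith
      linarith
    have h1 : y * (1 + y / a₃) ^ p ≤ Δ t ^ p := by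
      rw [hyd, ← Real.mul_rpow hv.le (by rw [← hyd]; positivity), ← hyd]
      exact Real.rpow_le_rpow (by positivity) hu hp0.le
    refine le_trans (mul_le_mul_of_nonneg_left ?_ hy.le) h1
    rw [Real.rpow_def_of_pos (by positivity)]
    have h2 := Real.add_one_le_exp (Real.log (1 + y / a₃) * p)
    have h3 := Real.one_sub_inv_le_log_of_pos (show 0 < 1 + y / a₃ by positivity)
    have h4 : 1 - (1 + y / a₃)⁻¹ = y / (a₃ + y) := by field_simp; ring
    rw [h4] at h3
    have h5 : y / (a₃ + Y) ≤ y / (a₃ + y) := by gcongr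
    have h6 : m * y = y / (a₃ + Y) * p := by rw [hm]; ring
    have h7 := mul_le_mul_of_nonneg_right (h5.trans h3) hp0.le
    linarith
  have step : ∀ t, (Δ t ^ p)⁻¹ + c ≤ (Δ (t+1) ^ p)⁻¹ := by
    intro t
    have k := key t
    have hy := hypos (t+1)
    have hyY' := hyY (t+1)
    obtain ⟨y, hyd⟩ : ∃ y, y = Δ (t+1) ^ p := ⟨_, rfl⟩
    rw [← hyd] at k hy hyY' ⊢
    have h1 : (Δ t ^ p)⁻¹ ≤ (y * (1 + m * y))⁻¹ := inv_anti₀ (by positivity) k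
    have h2 : c ≤ m / (1 + m * y) := by rw [hc]; gcongr
    have h3 : y⁻¹ = (y * (1 + m * y))⁻¹ + m / (1 + m * y) := by
      field_simp
    linarith
  have lin : ∀ t : ℕ, c * t ≤ (Δ t ^ p)⁻¹ := by
    intro t
    induction t with
    | zero => simpa using (hypos 0).le
    | succ n ih => have := step n; push_cast; linarith
  refine ⟨c ^ (-(1 / p)), Real.rpow_pos_of_pos hc0 _, fun t ht => ?_⟩
  have ht0 : (0:ℝ) < t := by exact_mod_cast ht
  rw [← Real.mul_rpow hc0.le ht0.le]
  have h := Real.rpow_le_rpow_of_nonpos (by positivity) (lin t) (show -(1 / p) ≤ 0 by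
    have : 0 < 1 / p := by positivity
    linarith)
  refine le_trans (le_of_eq ?_) h
  rw [← Real.rpow_neg (hpos t).le, ← Real.rpow_mul (hpos t).le]
  have : -p * -(1 / p) = 1 := by field_simp
  rw [this, Real.rpow_one]
end
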